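/- Identity (c6) of Appendix C: Let τ lie in the complex upper half-plane and let x ∈ ℂ be such that all theta-function values appearing in denominators below are nonzero. Then S'(x,τ)·( ℘₂(x, τ/2) − ℘₂(0, τ/2) ) = S''(1/2, τ)·S'(x + 1/2, τ). -/

import Mathlib

open Complex

/-- Jacobi theta function θ₁(u,τ). -/
noncomputable def theta1 (u τ : ℂ) : ℂ :=
  -∑' k : ℤ, Complex.exp ((Real.pi : ℂ) * Complex.I * τ * ((k : ℂ) + 1/2)^2
      + 2 * (Real.pi : ℂ) * Complex.I * (u + 1/2) * ((k : ℂ) + 1/2))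

/-- Jacobi theta function θ₂(u,τ). -/
noncomputable def theta2 (u τ : ℂ) : ℂ :=
  ∑' k : ℤ, Complex.exp ((Real.pi : ℂ) * Complex.I * τ * ((k : ℂ) + 1/2)^2
      + 2 * (Real.pi : ℂ) * Complex.I * u * ((k : ℂ) + 1/2))

/-- Jacobi theta function θ₃(u,τ). -/
noncomputable def theta3 (u τ : ℂ) : ℂ :=
  ∑' k : ℤ, Complex.exp ((Real.pi : ℂ) * Complex.I * τ * (k : ℂ)^2
      + 2 * (Real.pi : ℂ) * Complex.I * u * (k : ℂ))

/-- Jacobi theta function θ₄(u,τ). -/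
noncomputable def theta4 (u τ : ℂ) : ℂ :=
  ∑' k : ℤ, Complex.exp ((Real.pi : ℂ) * Complex.I * τ * (k : ℂ)^2
      + 2 * (Real.pi : ℂ) * Complex.I * (u + 1/2) * (k : ℂ))

/-- ζ_a(u,τ) = θ_a'(u,τ)/θ_a(u,τ). -/
noncomputable def zeta1 (u τ : ℂ) : ℂ := deriv (fun v => theta1 v τ) u / theta1 u τ
noncomputable def zeta2 (u τ : ℂ) : ℂ := deriv (fun v => theta2 v τ) u / theta2 u τ
noncomputable def zeta3 (u τ : ℂ) : ℂ := deriv (fun v => theta3 v τ) u / theta3 u τ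
noncomputable def zeta4 (u τ : ℂ) : ℂ := deriv (fun v => theta4 v τ) u / theta4 u τ

/-- ℘_a(u,τ) = −∂_u ζ_a(u,τ). -/
noncomputable def wp1 (u τ : ℂ) : ℂ := -deriv (fun v => zeta1 v τ) u
noncomputable def wp2 (u τ : ℂ) : ℂ := -deriv (fun v => zeta2 v τ) u
noncomputable def wp1' (u τ : ℂ) : ℂ := deriv (fun v => wp1 v τ) u
noncomputable def wp2' (u τ : ℂ) : ℂ := deriv (fun v => wp2 v τ) u

/-- S'(u,τ) = ζ₁(u,τ) − ζ₄(u,τ). -/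
noncomputable def Sp (u τ : ℂ) : ℂ := zeta1 u τ - zeta4 u τ
/-- S''(u,τ) = ∂_u S'(u,τ). -/
noncomputable def Spp (u τ : ℂ) : ℂ := deriv (fun v => Sp v τ) u
/-- S'''(u,τ) = ∂_u S''(u,τ). -/
noncomputable def Sppp (u τ : ℂ) : ℂ := deriv (fun v => Spp v τ) u

/-- Partial derivative in the j-th coordinate of a ℂ-valued function on ℝ^N. -/
noncomputable def pdC {N : ℕ} (j : Fin N) (f : (Fin N → ℝ) → ℂ) (x : Fin N → ℝ) : ℂ :=
  fderiv ℝ f x (Pi.single j 1)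

/-- Partial derivative in the j-th coordinate of an ℝ-valued function on ℝ^d. -/
noncomputable def pd {d : ℕ} (j : Fin d) (f : (Fin d → ℝ) → ℝ) (x : Fin d → ℝ) : ℝ :=
  fderiv ℝ f x (Pi.single j 1)

/-!
Put `t = θ₁ / θ₂` and `κ = t'(0)`, both taken at `τ / 2`. Splitting a product of two theta series
according to the parity of the sum of the indices gives
`2 θ₁(x+y, τ) θ₄(x-y, τ) = θ₁(x, τ/2) θ₂(y, τ/2) + θ₂(x, τ/2) θ₁(y, τ/2)`,
and comparing derivatives in `y` at `0` gives `S'(x, τ) = κ / t(x)`. The same splitting gives the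
addition formula for `θ₂(x+y, τ/2) θ₂(x-y, τ/2)`, and comparing second derivatives in `y` at `0`
gives `℘₂(x, τ/2) - ℘₂(0, τ/2) = κ² t(x)²`. As `t(x + 1/2) = -1 / t(x)`, it follows that
`S'(x + 1/2, τ) = -κ t(x)` and `S''(1/2, τ) = -κ²`, and both sides of the identity are equal to
`κ³ t(x)`.
-/

section Calculus

variable {𝕜 𝕜' : Type*} [NontriviallyNormedField 𝕜] [NontriviallyNormedField 𝕜']
  [NormedAlgebra 𝕜 𝕜'] {f g : 𝕜 → 𝕜'} {x : 𝕜}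

theorem deriv_zero_of_even {F : Type*} [NormedAddCommGroup F] [NormedSpace 𝕜 F]
    [IsAddTorsionFree F] {f : 𝕜 → F} (hf : f.Even) : deriv f 0 = 0 := by
  have h := deriv_comp_neg f 0
  rwa [funext hf, neg_zero, self_eq_neg] at h

theorem hasDerivAt_add_mul_sub {y : 𝕜} (hf : DifferentiableAt 𝕜 f (x + y))
    (hg : DifferentiableAt 𝕜 g (x - y)) :
    HasDerivAt (fun y => f (x + y) * g (x - y))
      (deriv f (x + y) * g (x - y) - f (x + y) * deriv g (x - y)) y :=
  ((hf.hasDerivAt.comp_const_add x y).mul (hg.hasDerivAt.comp_const_sub x y)).congr_deriv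
    (by ring)

theorem differentiable_add_mul_sub (hf : Differentiable 𝕜 f) (hg : Differentiable 𝕜 g) (x : 𝕜) :
    Differentiable 𝕜 fun y => f (x + y) * g (x - y) :=
  fun _ => (hasDerivAt_add_mul_sub (hf _) (hg _)).differentiableAt

theorem logDeriv_sub_logDeriv (hf : DifferentiableAt 𝕜 f x) (hg : DifferentiableAt 𝕜 g x)
    (hfx : f x ≠ 0) (hgx : g x ≠ 0) :
    logDeriv f x - logDeriv g x = deriv (fun y => f (x + y) * g (x - y)) 0 / (f x * g x) := by
  have h := hasDerivAt_add_mul_sub (x := x) (y := 0) (by simpa using hf) (by simpa using hg)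
  rw [h.deriv, add_zero, sub_zero, logDeriv_apply, logDeriv_apply, div_sub_div _ _ hfx hgx]

theorem iteratedDeriv_two_add_mul_sub (hf : Differentiable 𝕜 f)
    (hf' : Differentiable 𝕜 (deriv f)) (x : 𝕜) :
    iteratedDeriv 2 (fun y => f (x + y) * f (x - y)) 0 =
      2 * (deriv (deriv f) x * f x - deriv f x ^ 2) := by
  have first : deriv (fun y => f (x + y) * f (x - y)) =
      fun y => deriv f (x + y) * f (x - y) - f (x + y) * deriv f (x - y) :=
    funext fun y => (hasDerivAt_add_mul_sub (hf _) (hf _)).deriv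
  have second := (hasDerivAt_add_mul_sub (x := x) (y := 0) (hf' _) (hf _)).sub
    (hasDerivAt_add_mul_sub (x := x) (y := 0) (hf _) (hf' _))
  rw [iteratedDeriv_succ, iteratedDeriv_one, first]
  refine second.deriv.trans ?_
  rw [add_zero, sub_zero]
  ring

theorem deriv_logDeriv (hf : DifferentiableAt 𝕜 f x) (hf' : DifferentiableAt 𝕜 (deriv f) x)
    (hfx : f x ≠ 0) :
    deriv (logDeriv f) x = (deriv (deriv f) x * f x - deriv f x ^ 2) / f x ^ 2 := by
  rw [sq (deriv f x)]
  exact (hf'.hasDerivAt.div hf.hasDerivAt hfx).deriv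

end Calculus

section Series

variable {τ : ℂ}

theorem theta3_eq_jacobiTheta₂ (u τ : ℂ) : theta3 u τ = jacobiTheta₂ u τ := by
  refine tsum_congr fun k => ?_
  rw [jacobiTheta₂_term]
  ring_nf

theorem hasSum_theta3 (hτ : 0 < τ.im) (u : ℂ) :
    HasSum (fun k : ℤ => exp (Real.pi * I * τ * (k : ℂ) ^ 2 + 2 * Real.pi * I * u * k))
      (theta3 u τ) := by
  rw [theta3_eq_jacobiTheta₂]
  refine (hasSum_jacobiTheta₂_term u hτ).congr_fun fun k => ?_
  rw [jacobiTheta₂_term]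
  ring_nf

theorem hasSum_theta2_jacobiTheta₂ (hτ : 0 < τ.im) (u : ℂ) :
    HasSum (fun k : ℤ =>
        exp (Real.pi * I * τ * ((k : ℂ) + 1 / 2) ^ 2 + 2 * Real.pi * I * u * (k + 1 / 2)))
      (exp (Real.pi * I * τ / 4 + Real.pi * I * u) * jacobiTheta₂ (u + τ / 2) τ) := by
  refine ((hasSum_jacobiTheta₂_term (u + τ / 2) hτ).mul_left _).congr_fun fun k => ?_
  rw [jacobiTheta₂_term, ← exp_add]
  ring_nf

theorem theta2_eq_jacobiTheta₂ (hτ : 0 < τ.im) (u : ℂ) :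
    theta2 u τ = exp (Real.pi * I * τ / 4 + Real.pi * I * u) * jacobiTheta₂ (u + τ / 2) τ :=
  (hasSum_theta2_jacobiTheta₂ hτ u).tsum_eq

theorem hasSum_theta2 (hτ : 0 < τ.im) (u : ℂ) :
    HasSum (fun k : ℤ =>
        exp (Real.pi * I * τ * ((k : ℂ) + 1 / 2) ^ 2 + 2 * Real.pi * I * u * (k + 1 / 2)))
      (theta2 u τ) :=
  (hasSum_theta2_jacobiTheta₂ hτ u).summable.hasSum

end Series

section Symmetry

variable (u τ : ℂ)

theorem theta2_neg : theta2 (-u) τ = theta2 u τ := by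
  rw [theta2, ← (Equiv.subLeft (-1 : ℤ)).tsum_eq]
  refine tsum_congr fun k => ?_
  simp only [Equiv.subLeft_apply]
  push_cast
  ring_nf

theorem theta3_neg : theta3 (-u) τ = theta3 u τ := by
  simp only [theta3_eq_jacobiTheta₂, jacobiTheta₂_neg_left]

theorem theta2_add_one : theta2 (u + 1) τ = -theta2 u τ := by
  rw [theta2, theta2, ← tsum_neg]
  refine tsum_congr fun k => ?_
  have exp_half_odd : exp (2 * Real.pi * I * (k + 1 / 2)) = -1 := by
    rw [show 2 * Real.pi * I * ((k : ℂ) + 1 / 2) = k * (2 * Real.pi * I) + Real.pi * I by ring,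
      exp_add, exp_int_mul_two_pi_mul_I, exp_pi_mul_I, one_mul]
  rw [mul_add (2 * Real.pi * I) u 1, mul_one, add_mul, ← add_assoc, exp_add, exp_half_odd,
    mul_neg_one]

theorem theta3_add_one : theta3 (u + 1) τ = theta3 u τ := by
  simp only [theta3_eq_jacobiTheta₂, jacobiTheta₂_add_left]

theorem theta2_add_half : theta2 (u + 1 / 2) τ = -theta1 u τ :=
  (neg_neg _).symm

theorem theta3_add_half : theta3 (u + 1 / 2) τ = theta4 u τ :=
  rfl

theorem theta1_add_half : theta1 (u + 1 / 2) τ = theta2 u τ := by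
  rw [← neg_neg (theta1 _ τ), ← theta2_add_half, add_assoc, add_halves, theta2_add_one, neg_neg]

theorem theta1_neg : theta1 (-u) τ = -theta1 u τ := by
  rw [← theta2_add_half, ← theta2_neg, ← theta1_add_half]
  ring_nf

theorem theta4_neg : theta4 (-u) τ = theta4 u τ := by
  rw [← theta3_add_half, ← theta3_add_half, ← theta3_neg, ← theta3_add_one]
  ring_nf

theorem theta1_zero : theta1 0 τ = 0 :=
  Function.Odd.map_zero (f := (theta1 · τ)) (theta1_neg · τ)

theorem deriv_theta2_zero : deriv (theta2 · τ) 0 = 0 :=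
  deriv_zero_of_even (theta2_neg · τ)

end Symmetry

section Differentiability

variable {τ : ℂ}

theorem differentiable_theta3 (hτ : 0 < τ.im) : Differentiable ℂ (theta3 · τ) := by
  simp only [theta3_eq_jacobiTheta₂]
  exact fun u => differentiableAt_jacobiTheta₂_fst u hτ

theorem differentiable_theta2 (hτ : 0 < τ.im) : Differentiable ℂ (theta2 · τ) := by
  have h : Differentiable ℂ (jacobiTheta₂ · τ) := fun u => differentiableAt_jacobiTheta₂_fst u hτ
  simp only [theta2_eq_jacobiTheta₂ hτ]
  exact Differentiable.mul (by fun_prop) (h.comp (g := (jacobiTheta₂ · τ)) (by fun_prop))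

theorem differentiable_theta1 (hτ : 0 < τ.im) : Differentiable ℂ (theta1 · τ) :=
  ((differentiable_theta2 hτ).comp (differentiable_id.add_const (1 / 2))).neg

theorem differentiable_theta4 (hτ : 0 < τ.im) : Differentiable ℂ (theta4 · τ) :=
  (differentiable_theta3 hτ).comp (differentiable_id.add_const (1 / 2))

end Differentiability

section ProductFormulas

variable {τ : ℂ}

theorem bijective_sumElim_add_sub :
    Function.Bijective (Sum.elim (fun p : ℤ × ℤ => (p.1 + p.2, p.1 - p.2))
      (fun p : ℤ × ℤ => (p.1 + p.2, p.1 - p.2 - 1))) := by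
  constructor
  · rintro (⟨a, a'⟩ | ⟨a, a'⟩) (⟨b, b'⟩ | ⟨b, b'⟩) h <;>
      simp only [Sum.elim_inl, Sum.elim_inr, Prod.mk.injEq, Sum.inl.injEq, Sum.inr.injEq,
        reduceCtorEq] at h ⊢ <;> omega
  · rintro ⟨m, n⟩
    rcases Int.even_or_odd' (m + n) with ⟨k, even | odd⟩
    · exact ⟨Sum.inl (k, k - n), Prod.ext (by dsimp; omega) (by dsimp; omega)⟩
    · exact ⟨Sum.inr (k + 1, m - k - 1), Prod.ext (by dsimp; omega) (by dsimp; omega)⟩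

theorem hasSum_mul_prod {ι κ : Type*} {f : ι → ℂ} {g : κ → ℂ} {a b : ℂ} (hf : HasSum f a)
    (hg : HasSum g b) : HasSum (fun p : ι × κ => f p.1 * g p.2) (a * b) :=
  hf.mul hg (summable_mul_of_summable_norm hf.summable.norm hg.summable.norm)

theorem theta2_mul_theta2 (hτ : 0 < τ.im) (x y : ℂ) :
    theta2 x τ * theta2 y τ =
      theta2 (x + y) (2 * τ) * theta3 (x - y) (2 * τ) +
        theta3 (x + y) (2 * τ) * theta2 (x - y) (2 * τ) := by
  have h2τ : 0 < (2 * τ).im := by simpa using hτ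
  have sum_even := hasSum_mul_prod (hasSum_theta2 h2τ (x + y)) (hasSum_theta3 h2τ (x - y))
  have sum_odd := hasSum_mul_prod (hasSum_theta3 h2τ (x + y)) (hasSum_theta2 h2τ (x - y))
  refine (hasSum_mul_prod (hasSum_theta2 hτ x) (hasSum_theta2 hτ y)).unique
    ((Equiv.ofBijective _ bijective_sumElim_add_sub).hasSum_iff.mp (HasSum.sum ?_ ?_))
  · refine sum_even.congr_fun fun p => ?_
    simp only [Function.comp_apply, Equiv.ofBijective_apply, Sum.elim_inl, ← exp_add]
    push_cast
    ring_nf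
  · refine sum_odd.congr_fun fun p => ?_
    simp only [Function.comp_apply, Equiv.ofBijective_apply, Sum.elim_inr, ← exp_add]
    push_cast
    ring_nf

theorem theta1_mul_theta2 (hτ : 0 < τ.im) (x y : ℂ) :
    theta1 x τ * theta2 y τ =
      theta1 (x + y) (2 * τ) * theta4 (x - y) (2 * τ) +
        theta4 (x + y) (2 * τ) * theta1 (x - y) (2 * τ) := by
  have h := theta2_mul_theta2 hτ (x + 1 / 2) y
  rw [add_right_comm, add_sub_right_comm] at h
  simp only [theta2_add_half, theta3_add_half] at h
  linear_combination -h

theorem theta1_mul_theta1 (hτ : 0 < τ.im) (x y : ℂ) :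
    theta1 x τ * theta1 y τ =
      theta3 (x + y) (2 * τ) * theta2 (x - y) (2 * τ) -
        theta2 (x + y) (2 * τ) * theta3 (x - y) (2 * τ) := by
  have h := theta2_mul_theta2 hτ (x + 1 / 2) (y + 1 / 2)
  rw [add_add_add_comm, add_halves, add_sub_add_right_eq_sub] at h
  simp only [theta2_add_half, theta2_add_one, theta3_add_one] at h
  linear_combination h

theorem two_mul_theta1_mul_theta4 (hτ : 0 < τ.im) (x y : ℂ) :
    2 * (theta1 (x + y) (2 * τ) * theta4 (x - y) (2 * τ)) =
      theta1 x τ * theta2 y τ + theta2 x τ * theta1 y τ := by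
  have hxy := theta1_mul_theta2 hτ x y
  have hyx := theta1_mul_theta2 hτ y x
  rw [add_comm y x, ← neg_sub x y, theta1_neg, theta4_neg] at hyx
  linear_combination -hxy - hyx

theorem theta2_add_mul_theta2_sub (hτ : 0 < τ.im) (x y : ℂ) :
    theta2 0 τ ^ 2 * (theta2 (x + y) τ * theta2 (x - y) τ) =
      theta2 x τ ^ 2 * theta2 y τ ^ 2 - theta1 x τ ^ 2 * theta1 y τ ^ 2 := by
  have theta2_sq (u : ℂ) := theta2_mul_theta2 hτ u u
  have theta1_sq (u : ℂ) := theta1_mul_theta1 hτ u u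
  have h := theta2_mul_theta2 hτ (x + y) (x - y)
  rw [show x + y + (x - y) = x + x by ring, show x + y - (x - y) = y + y by ring] at h
  simp only [sq, h, theta2_sq, theta1_sq, sub_self, add_zero]
  ring

end ProductFormulas

section ThetaTan

/-- The quotient `θ₁ / θ₂`, which is the elliptic analogue of `u ↦ tan (π u)`. The modulus comes
first, so that `thetaTan τ` is the function of `u`; its value at a zero of `θ₂` is `0`. -/
noncomputable def thetaTan (τ u : ℂ) : ℂ :=
  theta1 u τ / theta2 u τ

variable {τ : ℂ}

theorem thetaTan_add_half (τ u : ℂ) : thetaTan τ (u + 1 / 2) = -(thetaTan τ u)⁻¹ := by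
  rw [thetaTan, thetaTan, theta1_add_half, theta2_add_half, div_neg, inv_div]

theorem thetaTan_sub_half (τ u : ℂ) : thetaTan τ (u - 1 / 2) = -(thetaTan τ u)⁻¹ := by
  rw [← neg_inj, neg_neg, ← inv_inj, inv_inv, inv_neg, ← thetaTan_add_half, sub_add_cancel]

theorem deriv_thetaTan_zero (hτ : 0 < τ.im) (h : theta2 0 τ ≠ 0) :
    deriv (thetaTan τ) 0 = deriv (theta1 · τ) 0 / theta2 0 τ := by
  have := ((differentiable_theta1 hτ 0).hasDerivAt.div
    (differentiable_theta2 hτ 0).hasDerivAt h).deriv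
  refine this.trans ?_
  rw [theta1_zero, zero_mul, sub_zero, sq, mul_div_mul_right _ _ h]

theorem Sp_two_mul (hτ : 0 < τ.im) {x : ℂ} (h₁ : theta1 x (2 * τ) ≠ 0)
    (h₄ : theta4 x (2 * τ) ≠ 0) :
    Sp x (2 * τ) = deriv (thetaTan τ) 0 * (thetaTan τ x)⁻¹ := by
  have h2τ : 0 < (2 * τ).im := by simpa using hτ
  have value : 2 * (theta1 x (2 * τ) * theta4 x (2 * τ)) = theta1 x τ * theta2 0 τ := by
    simpa [theta1_zero] using two_mul_theta1_mul_theta4 hτ x 0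
  have slope : 2 * deriv (fun y => theta1 (x + y) (2 * τ) * theta4 (x - y) (2 * τ)) 0 =
      theta2 x τ * deriv (theta1 · τ) 0 := by
    rw [← deriv_const_mul_field, funext (two_mul_theta1_mul_theta4 hτ x),
      deriv_fun_add ((differentiable_theta2 hτ 0).const_mul _)
        ((differentiable_theta1 hτ 0).const_mul _),
      deriv_const_mul_field, deriv_const_mul_field, deriv_theta2_zero, mul_zero, zero_add]
  have h₂ : theta2 0 τ ≠ 0 :=
    right_ne_zero_of_mul (value ▸ mul_ne_zero two_ne_zero (mul_ne_zero h₁ h₄))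
  calc Sp x (2 * τ)
      = deriv (fun y => theta1 (x + y) (2 * τ) * theta4 (x - y) (2 * τ)) 0 /
          (theta1 x (2 * τ) * theta4 x (2 * τ)) :=
        logDeriv_sub_logDeriv (differentiable_theta1 h2τ x) (differentiable_theta4 h2τ x) h₁ h₄
    _ = theta2 x τ * deriv (theta1 · τ) 0 / (theta1 x τ * theta2 0 τ) := by
        rw [← mul_div_mul_left _ _ two_ne_zero, slope, value]
    _ = deriv (thetaTan τ) 0 * (thetaTan τ x)⁻¹ := by
        rw [deriv_thetaTan_zero hτ h₂, thetaTan, inv_div, mul_comm (theta1 x τ), mul_comm,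
          mul_div_mul_comm]

theorem Spp_half_two_mul (hτ : 0 < τ.im) (h₁ : theta1 (1 / 2) (2 * τ) ≠ 0)
    (h₄ : theta4 (1 / 2) (2 * τ) ≠ 0) :
    Spp (1 / 2) (2 * τ) = -deriv (thetaTan τ) 0 ^ 2 := by
  have h2τ : 0 < (2 * τ).im := by simpa using hτ
  have Sp_eventuallyEq : (Sp · (2 * τ)) =ᶠ[nhds (1 / 2)]
      fun v => -deriv (thetaTan τ) 0 * thetaTan τ (v - 1 / 2) := by
    filter_upwards [(differentiable_theta1 h2τ).continuous.continuousAt.eventually_ne h₁,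
      (differentiable_theta4 h2τ).continuous.continuousAt.eventually_ne h₄] with v hv₁ hv₄
    rw [Sp_two_mul hτ hv₁ hv₄, thetaTan_sub_half, neg_mul_neg]
  rw [Spp, Sp_eventuallyEq.deriv_eq, deriv_const_mul_field, deriv_comp_sub_const, sub_self,
    neg_mul, sq]

theorem wp2_eq_neg_div (hτ : 0 < τ.im) {x : ℂ} (h : theta2 x τ ≠ 0) :
    wp2 x τ = -((deriv (deriv (theta2 · τ)) x * theta2 x τ - deriv (theta2 · τ) x ^ 2) /
      theta2 x τ ^ 2) :=
  congrArg Neg.neg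
    (deriv_logDeriv (differentiable_theta2 hτ x) ((differentiable_theta2 hτ).deriv x) h)

theorem theta2_sq_mul_deriv_deriv_sub_sq (hτ : 0 < τ.im) (x : ℂ) :
    theta2 0 τ ^ 2 * (deriv (deriv (theta2 · τ)) x * theta2 x τ - deriv (theta2 · τ) x ^ 2) =
      theta2 x τ ^ 2 *
          (deriv (deriv (theta2 · τ)) 0 * theta2 0 τ - deriv (theta2 · τ) 0 ^ 2) -
        theta1 x τ ^ 2 * deriv (theta1 · τ) 0 ^ 2 := by
  have hθ₁ := differentiable_theta1 hτ
  have hθ₂ := differentiable_theta2 hτ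
  have addition (y : ℂ) : theta2 0 τ ^ 2 * (theta2 (x + y) τ * theta2 (x - y) τ) =
      theta2 x τ ^ 2 * (theta2 (0 + y) τ * theta2 (0 - y) τ) +
        theta1 x τ ^ 2 * (theta1 (0 + y) τ * theta1 (0 - y) τ) := by
    rw [theta2_add_mul_theta2_sub hτ, zero_add, zero_sub, theta1_neg, theta2_neg]
    ring
  have second := congrArg (iteratedDeriv 2 · 0) (funext addition)
  rw [iteratedDeriv_const_mul_field,
    iteratedDeriv_fun_add ((differentiable_add_mul_sub hθ₂ hθ₂ 0).const_mul _).contDiff.contDiffAt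
      ((differentiable_add_mul_sub hθ₁ hθ₁ 0).const_mul _).contDiff.contDiffAt,
    iteratedDeriv_const_mul_field, iteratedDeriv_const_mul_field,
    iteratedDeriv_two_add_mul_sub hθ₂ hθ₂.deriv, iteratedDeriv_two_add_mul_sub hθ₂ hθ₂.deriv,
    iteratedDeriv_two_add_mul_sub hθ₁ hθ₁.deriv, theta1_zero] at second
  linear_combination second / 2

theorem wp2_sub_wp2_zero (hτ : 0 < τ.im) {x : ℂ} (hx : theta2 x τ ≠ 0) (h₀ : theta2 0 τ ≠ 0) :
    wp2 x τ - wp2 0 τ = deriv (thetaTan τ) 0 ^ 2 * thetaTan τ x ^ 2 := by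
  rw [wp2_eq_neg_div hτ hx, wp2_eq_neg_div hτ h₀, deriv_thetaTan_zero hτ h₀, thetaTan]
  field_simp
  linear_combination -theta2_sq_mul_deriv_deriv_sub_sq hτ x

end ThetaTan

/-- Identity (c6) of Appendix C:
S'(x,τ)·(℘₂(x,τ/2) − ℘₂(0,τ/2)) = S''(1/2,τ)·S'(x+1/2,τ). -/
theorem identity_c6 (τ x : ℂ) (hτ : 0 < τ.im)
    (h1 : theta1 x τ ≠ 0) (h2 : theta4 x τ ≠ 0)
    (h3 : theta2 x (τ / 2) ≠ 0) (h4 : theta2 0 (τ / 2) ≠ 0)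
    (h5 : theta1 (1 / 2) τ ≠ 0) (h6 : theta4 (1 / 2) τ ≠ 0)
    (h7 : theta1 (x + 1 / 2) τ ≠ 0) (h8 : theta4 (x + 1 / 2) τ ≠ 0) :
    Sp x τ * (wp2 x (τ / 2) - wp2 0 (τ / 2)) = Spp (1 / 2) τ * Sp (x + 1 / 2) τ := by
  obtain ⟨σ, rfl⟩ : ∃ σ, τ = 2 * σ := ⟨τ / 2, by ring⟩
  have hσ : 0 < σ.im := by simpa using hτ
  rw [mul_div_cancel_left₀ σ two_ne_zero] at h3 h4 ⊢
  rw [Sp_two_mul hσ h1 h2, Sp_two_mul hσ h7 h8, Spp_half_two_mul hσ h5 h6,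
    wp2_sub_wp2_zero hσ h3 h4, thetaTan_add_half, inv_neg, inv_inv]
  field_simp
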